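/- Let A = γZ + λᵀU + ε_A where (Z,U) is centered Gaussian with Var(Z)=1, Var(U)=Iₜ, Cov(Z,U)=ξᵀ, ε_A is independent of (Z,U) with mean zero and positive variance, γ + ξᵀλ ≠ 0, and ε_A is not Gaussian. Then E(Z | A) is not almost surely a linear function of A; i.e., there is no constant c with E(Z | A) = cA a.s. -/

import Mathlib

open MeasureTheory ProbabilityTheory

lemma aux_meas {Ω : Type*} [MeasurableSpace Ω] (μ : Measure Ω)
    (X : Ω → ℝ) (hX : Measurable X) :
    AEStronglyMeasurable (fun ω => Complex.exp ((X ω : ℂ) * Complex.I)) μ := by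
  have : Measurable (fun ω => Complex.exp ((X ω : ℂ) * Complex.I)) := by fun_prop
  exact this.aestronglyMeasurable

lemma aux_int {Ω : Type*} [MeasurableSpace Ω] (μ : Measure Ω) [IsProbabilityMeasure μ]
    (X : Ω → ℝ) (hX : Measurable X) :
    Integrable (fun ω => Complex.exp ((X ω : ℂ) * Complex.I)) μ := by
  refine Integrable.of_bound (aux_meas μ X hX) 1 (Filter.Eventually.of_forall fun ω => ?_)
  rw [Complex.norm_exp_ofReal_mul_I]

lemma aux_deriv {Ω : Type*} [MeasurableSpace Ω] (μ : Measure Ω) [IsProbabilityMeasure μ]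
    (X Y : Ω → ℝ) (hX : Measurable X) (hY : Measurable Y) (hi : Integrable X μ) (u : ℝ) :
    HasDerivAt (fun u : ℝ => ∫ ω, Complex.exp (((u * X ω + Y ω : ℝ) : ℂ) * Complex.I) ∂μ)
      (∫ ω, (X ω : ℂ) * Complex.I *
        Complex.exp (((u * X ω + Y ω : ℝ) : ℂ) * Complex.I) ∂μ) u := by
  refine (hasDerivAt_integral_of_dominated_loc_of_deriv_le (s := Set.univ)
    (F := fun (u : ℝ) ω => Complex.exp (((u * X ω + Y ω : ℝ) : ℂ) * Complex.I))
    (F' := fun (u : ℝ) ω => (X ω : ℂ) * Complex.I *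
        Complex.exp (((u * X ω + Y ω : ℝ) : ℂ) * Complex.I))
    (bound := fun ω => |X ω|) Filter.univ_mem ?_ ?_ ?_ ?_ hi.abs ?_).2
  · exact Filter.Eventually.of_forall fun v => aux_meas μ (fun ω => v * X ω + Y ω) (by fun_prop)
  · exact aux_int μ (fun ω => u * X ω + Y ω) (by fun_prop)
  · have : Measurable (fun ω => (X ω : ℂ) * Complex.I *
        Complex.exp (((u * X ω + Y ω : ℝ) : ℂ) * Complex.I)) := by fun_prop
    exact this.aestronglyMeasurable
  · refine Filter.Eventually.of_forall fun ω v _ => ?_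
    rw [norm_mul, Complex.norm_exp_ofReal_mul_I]
    simp
  · refine Filter.Eventually.of_forall fun ω v _ => ?_
    have h1 : HasDerivAt (fun v : ℝ => v * X ω + Y ω) (X ω) v := by
      simpa using ((hasDerivAt_id v).mul_const (X ω)).add_const (Y ω)
    have h2 := (h1.ofReal_comp.mul_const Complex.I).cexp
    rw [mul_comm] at h2
    exact h2

lemma aux_cond {Ω : Type*} [MeasurableSpace Ω] (μ : Measure Ω) [IsProbabilityMeasure μ]
    (Z A : Ω → ℝ) (hA : Measurable A) (hZi : Integrable Z μ) (c : ℝ)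
    (h : μ[Z | MeasurableSpace.comap A inferInstance] =ᵐ[μ] fun ω => c * A ω)
    (g : ℝ → ℝ) (hg : Measurable g) (hb : ∀ x, |g x| ≤ 1) :
    ∫ ω, g (A ω) * Z ω ∂μ = ∫ ω, g (A ω) * (c * A ω) ∂μ := by
  have hm : MeasurableSpace.comap A inferInstance ≤ ‹MeasurableSpace Ω› := hA.comap_le
  have hgm : StronglyMeasurable[MeasurableSpace.comap A inferInstance] (fun ω => g (A ω)) :=
    (hg.comp (comap_measurable A)).stronglyMeasurable
  have h1 := condExp_stronglyMeasurable_mul_of_bound hm hgm hZi 1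
    (Filter.Eventually.of_forall fun ω => hb (A ω))
  have h2 := integral_condExp (μ := μ) hm (f := (fun ω => g (A ω)) * Z)
  have h3 : ∫ ω, g (A ω) * Z ω ∂μ = ∫ ω, ((fun ω => g (A ω)) * Z) ω ∂μ := rfl
  rw [h3, ← h2]
  refine integral_congr_ae ?_
  filter_upwards [h1, h] with ω a b
  rw [a, Pi.mul_apply, b]

lemma aux_condC {Ω : Type*} [MeasurableSpace Ω] (μ : Measure Ω) [IsProbabilityMeasure μ]
    (Z A : Ω → ℝ) (hA : Measurable A) (hZi : Integrable Z μ)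
    (hAi : Integrable A μ) (c : ℝ)
    (h : μ[Z | MeasurableSpace.comap A inferInstance] =ᵐ[μ] fun ω => c * A ω) (t : ℝ) :
    ∫ ω, (Z ω : ℂ) * Complex.I * Complex.exp (((t * A ω : ℝ) : ℂ) * Complex.I) ∂μ
      = c * ∫ ω, (A ω : ℂ) * Complex.I * Complex.exp (((t * A ω : ℝ) : ℂ) * Complex.I) ∂μ := by
  have key : ∀ X : Ω → ℝ, Integrable X μ →
      ∫ ω, (X ω : ℂ) * Complex.I * Complex.exp (((t * A ω : ℝ) : ℂ) * Complex.I) ∂μ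
      = Complex.I * ((∫ ω, Real.cos (t * A ω) * X ω ∂μ : ℝ) : ℂ)
        - ((∫ ω, Real.sin (t * A ω) * X ω ∂μ : ℝ) : ℂ) := by
    intro X hX
    have i1 : Integrable (fun ω => Real.cos (t * A ω) * X ω) μ := by
      refine hX.bdd_mul (c := 1) (by fun_prop) (Filter.Eventually.of_forall fun ω => ?_)
      exact Real.abs_cos_le_one _
    have i2 : Integrable (fun ω => Real.sin (t * A ω) * X ω) μ := by
      refine hX.bdd_mul (c := 1) (by fun_prop) (Filter.Eventually.of_forall fun ω => ?_)
      exact Real.abs_sin_le_one _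
    rw [← integral_complex_ofReal, ← integral_complex_ofReal, ← integral_const_mul,
      ← integral_sub (i1.ofReal.const_mul _) i2.ofReal]
    refine integral_congr_ae (Filter.Eventually.of_forall fun ω => ?_)
    simp only [Complex.exp_mul_I]
    push_cast
    linear_combination (X ω : ℂ) * Complex.sin (t * A ω) * Complex.I_sq
  rw [← integral_const_mul]
  have e : ∀ ω, (c : ℂ) * ((A ω : ℂ) * Complex.I * Complex.exp (((t * A ω : ℝ) : ℂ) * Complex.I))
     = ((c * A ω : ℝ) : ℂ) * Complex.I * Complex.exp (((t * A ω : ℝ) : ℂ) * Complex.I) := by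
    intro ω; push_cast; ring
  simp_rw [e]
  rw [key Z hZi, key (fun ω => c * A ω) (hAi.const_mul c),
    aux_cond μ Z A hA hZi c h (fun x => Real.cos (t * x)) (by fun_prop)
      (fun x => Real.abs_cos_le_one _),
    aux_cond μ Z A hA hZi c h (fun x => Real.sin (t * x)) (by fun_prop)
      (fun x => Real.abs_sin_le_one _)]

lemma aux_gauss {Ω : Type*} [MeasurableSpace Ω] (μ : Measure Ω) [IsProbabilityMeasure μ]
    (X : Ω → ℝ) (hX : Measurable X) (v : NNReal) (h : Measure.map X μ = gaussianReal 0 v) :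
    MemLp X 2 μ ∧ ∫ ω, Complex.exp ((X ω : ℂ) * Complex.I) ∂μ
      = Complex.exp (-((∫ ω, X ω ^ 2 ∂μ : ℝ) : ℂ) / 2) := by
  have hmem : MemLp X 2 μ := by
    have := memLp_id_gaussianReal' (μ := 0) (v := v) 2 (by simp)
    rw [← h] at this
    exact (memLp_map_measure_iff (by fun_prop) hX.aemeasurable).1 this
  refine ⟨hmem, ?_⟩
  have hmean : ∫ ω, X ω ∂μ = 0 := by
    have : ∫ x, x ∂(Measure.map X μ) = 0 := by rw [h]; simp
    rwa [integral_map hX.aemeasurable (by fun_prop)] at this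
  have hv : (∫ ω, X ω ^ 2 ∂μ) = v := by
    have : Var[id; Measure.map X μ] = v := by rw [h]; simp
    rw [variance_id_map hX.aemeasurable, variance_of_integral_eq_zero hX.aemeasurable hmean] at this
    exact this
  have hc := charFun_gaussianReal (μ := 0) (v := v) 1
  rw [← h, charFun_apply_real, integral_map hX.aemeasurable (by fun_prop)] at hc
  rw [hv]
  simp at hc
  rw [hc]
  congr 1
  ring

/-- With A = γZ + λᵀU + ε_A, (Z,U) centered Gaussian as stated,
ε_A independent of (Z,U) with mean zero, positive variance, non-Gaussian, and
γ + ξᵀλ ≠ 0, E(Z | A) is not a.s. a linear function of A. -/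
theorem stmt6 {Ω : Type*} [MeasurableSpace Ω] (μ : Measure Ω) [IsProbabilityMeasure μ]
    {t : ℕ} (Z : Ω → ℝ) (U : Ω → Fin t → ℝ) (εA : Ω → ℝ)
    (hmZ : Measurable Z) (hmU : Measurable U) (hmε : Measurable εA)
    (hGauss : ∀ (a : ℝ) (b : Fin t → ℝ), ∃ v : NNReal,
      Measure.map (fun ω => a * Z ω + ∑ i, b i * U ω i) μ = gaussianReal 0 v)
    (ξ : Fin t → ℝ)
    (hvarZ : ∫ ω, Z ω * Z ω ∂μ = 1)
    (hvarU : ∀ i j, ∫ ω, U ω i * U ω j ∂μ = if i = j then 1 else 0)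
    (hcov : ∀ i, ∫ ω, Z ω * U ω i ∂μ = ξ i)
    (hindep : IndepFun εA (fun ω => (Z ω, U ω)) μ)
    (hε0 : ∫ ω, εA ω ∂μ = 0) (hεvar : 0 < variance εA μ)
    (hεnonGauss : ¬ ∃ (m : ℝ) (v : NNReal), Measure.map εA μ = gaussianReal m v)
    (γ : ℝ) (lam : Fin t → ℝ)
    (hne : γ + ∑ i, ξ i * lam i ≠ 0)
    (A : Ω → ℝ) (hA : ∀ ω, A ω = γ * Z ω + (∑ i, lam i * U ω i) + εA ω) :
    ¬ ∃ c : ℝ, μ[Z | MeasurableSpace.comap A inferInstance]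
        =ᵐ[μ] fun ω => c * A ω := by
  rintro ⟨c, hc⟩
  have hmUi : ∀ i, Measurable (fun ω => U ω i) := fun i => (measurable_pi_apply i).comp hmU
  obtain ⟨S, hS⟩ : ∃ S : Ω → ℝ, S = fun ω => γ * Z ω + ∑ i, lam i * U ω i := ⟨_, rfl⟩
  have hmS : Measurable S := by
    rw [hS]
    exact (hmZ.const_mul _).add (Finset.measurable_sum _ fun i _ => (hmUi i).const_mul _)
  have hAS : A = fun ω => S ω + εA ω := by
    funext ω; rw [hA, hS]
  have hmA : Measurable A := by rw [hAS]; exact hmS.add hmε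
  have hε2 : MemLp εA 2 μ := by
    by_contra hcon
    have h1 : evariance εA μ = ⊤ := by
      by_contra h2
      exact hcon ((evariance_lt_top_iff_memLp hmε.aestronglyMeasurable).1 (lt_top_iff_ne_top.2 h2))
    rw [variance, h1] at hεvar
    simp at hεvar
  -- Gaussian combos
  have hcomb : ∀ u s : ℝ, MemLp (fun ω => u * Z ω + s * S ω) 2 μ ∧
      ∫ ω, Complex.exp (((u * Z ω + s * S ω : ℝ) : ℂ) * Complex.I) ∂μ
      = Complex.exp (-((∫ ω, (u * Z ω + s * S ω) ^ 2 ∂μ : ℝ) : ℂ) / 2) := by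
    intro u s
    obtain ⟨v, hv⟩ := hGauss (u + s * γ) (fun i => s * lam i)
    have e : (fun ω => (u + s * γ) * Z ω + ∑ i, s * lam i * U ω i)
        = fun ω => u * Z ω + s * S ω := by
      funext ω
      rw [hS]
      simp only [mul_add, Finset.mul_sum, mul_assoc]
      ring
    rw [e] at hv
    exact aux_gauss μ _ (by fun_prop) v hv
  have hZ2 : MemLp Z 2 μ := by simpa using (hcomb 1 0).1
  have hS2 : MemLp S 2 μ := by simpa using (hcomb 0 1).1
  have hU2 : ∀ i, MemLp (fun ω => U ω i) 2 μ := by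
    intro i
    obtain ⟨v, hv⟩ := hGauss 0 (fun j => if j = i then 1 else 0)
    have := (aux_gauss μ _ (by fun_prop) v hv).1
    simpa using this
  have hZi : Integrable Z μ := hZ2.integrable (by norm_num)
  have hAi : Integrable A μ := by
    rw [hAS]; exact (hS2.integrable (by norm_num)).add (hε2.integrable (by norm_num))
  obtain ⟨δ, hδ⟩ : ∃ δ : ℝ, δ = γ + ∑ i, ξ i * lam i := ⟨_, rfl⟩
  rw [← hδ] at hne
  have hZS : ∫ ω, Z ω * S ω ∂μ = δ := by
    have e : ∀ ω, Z ω * S ω = γ * (Z ω * Z ω) + ∑ i, lam i * (Z ω * U ω i) := by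
      intro ω
      rw [hS]
      simp only [mul_add, Finset.mul_sum]
      congr 1
      · ring
      · exact Finset.sum_congr rfl fun i _ => by ring
    have iU : ∀ i, Integrable (fun ω => lam i * (Z ω * U ω i)) μ :=
      fun i => (hZ2.integrable_mul (hU2 i)).const_mul _
    simp_rw [e]
    have iZ : Integrable (fun ω => γ * (Z ω * Z ω)) μ := (hZ2.integrable_mul hZ2).const_mul _
    rw [integral_add iZ (integrable_finsetSum _ fun i _ => iU i),
      integral_finsetSum _ (fun i _ => iU i), integral_const_mul, hvarZ, hδ]
    simp_rw [integral_const_mul, hcov]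
    simp [mul_comm]
  obtain ⟨σ, hσ⟩ : ∃ σ : ℝ, σ = ∫ ω, S ω * S ω ∂μ := ⟨_, rfl⟩
  have hquad : ∀ u s : ℝ, ∫ ω, (u * Z ω + s * S ω) ^ 2 ∂μ
      = u ^ 2 + 2 * u * s * δ + s ^ 2 * σ := by
    intro u s
    have e : ∀ ω, (u * Z ω + s * S ω) ^ 2 = u ^ 2 * (Z ω * Z ω) + 2 * u * s * (Z ω * S ω)
      + s ^ 2 * (S ω * S ω) := fun ω => by ring
    have i1 : Integrable (fun ω => u ^ 2 * (Z ω * Z ω)) μ := (hZ2.integrable_mul hZ2).const_mul _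
    have i2 : Integrable (fun ω => 2 * u * s * (Z ω * S ω)) μ :=
      (hZ2.integrable_mul hS2).const_mul _
    have i3 : Integrable (fun ω => s ^ 2 * (S ω * S ω)) μ := (hS2.integrable_mul hS2).const_mul _
    simp_rw [e]
    have i12 : Integrable (fun ω => u ^ 2 * (Z ω * Z ω) + 2 * u * s * (Z ω * S ω)) μ := i1.add i2
    rw [integral_add i12 i3, integral_add i1 i2]
    simp_rw [integral_const_mul]
    rw [hvarZ, hZS, hσ]
    ring
  -- characteristic functions
  obtain ⟨φ, hφ⟩ : ∃ φ : ℝ → ℂ, φ = fun s =>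
    ∫ ω, Complex.exp (((s * A ω : ℝ) : ℂ) * Complex.I) ∂μ := ⟨_, rfl⟩
  obtain ⟨ψ, hψ⟩ : ∃ ψ : ℝ → ℂ, ψ = fun s =>
    ∫ ω, Complex.exp (((s * εA ω : ℝ) : ℂ) * Complex.I) ∂μ := ⟨_, rfl⟩
  have hfac : ∀ u s : ℝ, ∫ ω, Complex.exp (((u * Z ω + s * A ω : ℝ) : ℂ) * Complex.I) ∂μ
      = Complex.exp (-((u ^ 2 + 2 * u * s * δ + s ^ 2 * σ : ℝ) : ℂ) / 2) * ψ s := by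
    intro u s
    rw [← hquad, ← (hcomb u s).2, hψ]
    have hmf : Measurable (fun x : ℝ => Complex.exp (((s * x : ℝ) : ℂ) * Complex.I)) := by fun_prop
    have hmg : Measurable (fun p : ℝ × (Fin t → ℝ) => Complex.exp (((u * p.1 + s *
        (γ * p.1 + ∑ i, lam i * p.2 i) : ℝ) : ℂ) * Complex.I)) := by fun_prop
    have hi := (hindep.comp hmf hmg).symm
    have := hi.integral_fun_mul_eq_mul_integral
      (hmg.comp (hmZ.prodMk hmU)).aestronglyMeasurable (hmf.comp hmε).aestronglyMeasurable
    simp only [Function.comp_def] at this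
    rw [hAS, hS]
    simp only
    rw [← this]
    refine integral_congr_ae (Filter.Eventually.of_forall fun ω => ?_)
    simp only
    rw [← Complex.exp_add]
    congr 1
    push_cast
    ring
  have hφψ : ∀ s : ℝ, φ s = Complex.exp (-((s ^ 2 * σ : ℝ) : ℂ) / 2) * ψ s := by
    intro s
    have := hfac 0 s
    simpa [hφ] using this
  have hφd : ∀ s : ℝ, HasDerivAt φ
      (∫ ω, (A ω : ℂ) * Complex.I * Complex.exp (((s * A ω : ℝ) : ℂ) * Complex.I) ∂μ) s := by
    intro s
    have := aux_deriv μ A (fun _ => 0) hmA measurable_const hAi s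
    simpa only [add_zero, ← hφ] using this
  have hZd : ∀ s : ℝ, ∫ ω, (Z ω : ℂ) * Complex.I * Complex.exp (((s * A ω : ℝ) : ℂ) * Complex.I) ∂μ
      = -(s * δ : ℂ) * φ s := by
    intro s
    have h1 := aux_deriv μ Z (fun ω => s * A ω) hmZ (by fun_prop) hZi 0
    simp only [hfac] at h1
    have h2 : HasDerivAt (fun u : ℝ => -(u ^ 2 + 2 * u * s * δ + s ^ 2 * σ) / 2) (-(s * δ)) 0 := by
      have a := (((hasDerivAt_id (0 : ℝ)).pow 2).add
        ((hasDerivAt_id (0 : ℝ)).const_mul (2 * s * δ))).add_const (s ^ 2 * σ)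
      have b := (a.neg).div_const 2
      convert! b using 1
      · funext u; simp; ring
      · simp; ring
    have h3 := h2.ofReal_comp.cexp.mul_const (ψ s)
    have h4 := h1.unique (by convert! h3 using 1; funext u; push_cast; rfl)
    simp only [zero_mul, zero_add] at h4
    rw [h4, hφψ]
    push_cast
    simp
    ring
  have hode : ∀ s : ℝ, -(s * δ : ℂ) * φ s = c *
      (∫ ω, (A ω : ℂ) * Complex.I * Complex.exp (((s * A ω : ℝ) : ℂ) * Complex.I) ∂μ) := by
    intro s
    rw [← hZd, aux_condC μ Z A hmA hZi hAi c hc s]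
  have hφ0 : φ 0 = 1 := by simp [hφ]
  have hφcont : Continuous φ := continuous_iff_continuousAt.2 fun s => (hφd s).continuousAt
  have hc0 : c ≠ 0 := by
    intro h0
    have hz : ∀ s : ℝ, s ≠ 0 → φ s = 0 := by
      intro s hs
      have := hode s
      rw [h0] at this
      simpa [hs, hne] using this
    have h5 : φ = fun _ => 0 := by
      refine Continuous.ext_on (dense_compl_singleton (0 : ℝ)) hφcont continuous_const ?_
      intro s hs
      exact hz s hs
    rw [h5] at hφ0
    simp at hφ0
  obtain ⟨κ, hκ⟩ : ∃ κ : ℝ, κ = δ / c := ⟨_, rfl⟩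
  have hφd' : ∀ s : ℝ, HasDerivAt φ (-(s * κ : ℂ) * φ s) s := by
    intro s
    convert! hφd s using 1
    have hcc : (c : ℂ) ≠ 0 := by exact_mod_cast hc0
    have := hode s
    rw [hκ, Complex.ofReal_div]
    generalize (∫ ω, (A ω : ℂ) * Complex.I * Complex.exp (((s * A ω : ℝ) : ℂ) * Complex.I) ∂μ) = J
      at this ⊢
    field_simp
    linear_combination this
  have hprod : ∀ s : ℝ, HasDerivAt
      (fun s : ℝ => Complex.exp ((s ^ 2 * κ / 2 : ℝ) : ℂ) * φ s) 0 s := by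
    intro s
    have h2 : HasDerivAt (fun s : ℝ => s ^ 2 * κ / 2) (s * κ) s := by
      have a := (((hasDerivAt_id s).pow 2).mul_const κ).div_const 2
      convert! a using 1
      simp; ring
    have h3 := h2.ofReal_comp.cexp.mul (hφd' s)
    convert! h3 using 1
    push_cast
    ring
  have hsol : ∀ s : ℝ, Complex.exp ((s ^ 2 * κ / 2 : ℝ) : ℂ) * φ s = 1 := by
    intro s
    have := is_const_of_deriv_eq_zero (fun s => (hprod s).differentiableAt)
      (fun s => (hprod s).deriv) s 0
    simpa [hφ0] using this
  have hψsol : ∀ s : ℝ, ψ s = Complex.exp ((-((κ - σ) * s ^ 2 / 2) : ℝ) : ℂ) := by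
    intro s
    have h1 := hsol s
    rw [hφψ, ← mul_assoc, ← Complex.exp_add] at h1
    have h2 : Complex.exp ((-((κ - σ) * s ^ 2 / 2) : ℝ) : ℂ) *
       Complex.exp (((s ^ 2 * κ / 2 : ℝ) : ℂ) + -((s ^ 2 * σ : ℝ) : ℂ) / 2) = 1 := by
      rw [← Complex.exp_add, ← Complex.exp_zero]
      congr 1
      push_cast
      ring
    calc ψ s = (Complex.exp ((-((κ - σ) * s ^ 2 / 2) : ℝ) : ℂ) *
       Complex.exp (((s ^ 2 * κ / 2 : ℝ) : ℂ) + -((s ^ 2 * σ : ℝ) : ℂ) / 2)) * ψ s := by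
          rw [h2, one_mul]
      _ = _ := by rw [mul_assoc, h1, mul_one]
  have hk : 0 ≤ κ - σ := by
    have h1 : ‖ψ 1‖ ≤ 1 := by
      rw [hψ]
      refine (norm_integral_le_integral_norm _).trans ?_
      simp only [Complex.norm_exp_ofReal_mul_I]
      simp
    rw [hψsol, ← Complex.ofReal_exp, Complex.norm_real, Real.norm_eq_abs, Real.abs_exp,
      Real.exp_le_one_iff] at h1
    linarith
  apply hεnonGauss
  refine ⟨0, (κ - σ).toNNReal, ?_⟩
  have := Measure.isProbabilityMeasure_map (μ := μ) hmε.aemeasurable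
  apply Measure.ext_of_charFun
  funext s
  rw [charFun_gaussianReal, charFun_apply_real, integral_map hmε.aemeasurable (by fun_prop)]
  have h1 := hψsol s
  rw [hψ] at h1
  simp only [Complex.ofReal_mul] at h1
  rw [h1]
  congr 1
  rw [Real.coe_toNNReal _ hk]
  push_cast
  simp
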